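/- Let k ≥ 2 and let n_1, …, n_k be even positive integers. Then the signed total domination number of the complete k-partite graph K_{n_1,…,n_k} equals 4. -/

import Mathlib

open scoped Classical

/-- The signed total domination number of a finite simple graph `G`: the minimum weight of a
function `f : V → {−1, 1}` such that `f(N(v)) ≥ 1` for every vertex `v`. -/
noncomputable def signedTotalDomNum {V : Type*} [Fintype V] (G : SimpleGraph V) : ℤ :=
  sInf {w : ℤ | ∃ f : V → ℤ, (∀ v, f v = 1 ∨ f v = -1) ∧
    (∀ v, 1 ≤ ∑ u ∈ G.neighborFinset v, f u) ∧ w = ∑ v, f v}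

/-!
In a complete multipartite graph the neighbours of a vertex are the vertices of all other parts.
A sum of signs over a part of even size is even, so domination forces every neighbourhood sum to
be at least `2`. At any vertex, this gives a part with positive sum, which is then at least `2`;
at a vertex of that part, it gives another `2` from the remaining parts. Conversely, signs with
sum `2` on two parts and sum `0` on all others attain `4`.
-/

/-- A signed total dominating function of `G`: the functions over whose weights
`signedTotalDomNum G` takes the minimum. -/
structure IsSignedTotalDominating {V : Type*} [Fintype V] (G : SimpleGraph V) (f : V → ℤ) :
    Prop where
  eq_one_or_eq_neg_one : ∀ v, f v = 1 ∨ f v = -1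
  one_le_sum_neighborFinset : ∀ v, 1 ≤ ∑ u ∈ G.neighborFinset v, f u

lemma IsSignedTotalDominating.signedTotalDomNum_eq {V : Type*} [Fintype V] {G : SimpleGraph V}
    {f : V → ℤ} (hf : IsSignedTotalDominating G f)
    (hmin : ∀ g, IsSignedTotalDominating G g → ∑ v, f v ≤ ∑ v, g v) :
    signedTotalDomNum G = ∑ v, f v := by
  refine IsLeast.csInf_eq ⟨⟨f, hf.1, hf.2, rfl⟩, ?_⟩
  rintro _ ⟨g, hsign, hdom, rfl⟩
  exact hmin g ⟨hsign, hdom⟩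

section Signs

variable {α : Type*} [Fintype α]

lemma even_sum_signs_iff {f : α → ℤ} (hf : ∀ a, f a = 1 ∨ f a = -1) :
    Even (∑ a, f a) ↔ Even (Fintype.card α) := by
  have hshift : Even (∑ a, (f a + 1)) :=
    Finset.even_sum _ fun a _ => by rcases hf a with h | h <;> simp [h]
  simpa [Finset.sum_add_distrib, Int.even_add] using hshift

lemma exists_signs_sum_eq_two_mul_sub_card {m : ℕ} (hm : m ≤ Fintype.card α) :
    ∃ f : α → ℤ, (∀ a, f a = 1 ∨ f a = -1) ∧ ∑ a, f a = 2 * m - Fintype.card α := by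
  obtain ⟨s, -, rfl⟩ := Finset.exists_subset_card_eq (s := Finset.univ) hm
  refine ⟨fun a => 2 * (if a ∈ s then 1 else 0) - 1, fun a => ?_, ?_⟩
  · by_cases ha : a ∈ s <;> simp [ha]
  · simp [mul_comm]

lemma exists_signs_sum_eq_zero (hα : Even (Fintype.card α)) :
    ∃ f : α → ℤ, (∀ a, f a = 1 ∨ f a = -1) ∧ ∑ a, f a = 0 := by
  obtain ⟨m, hm⟩ := hα
  obtain ⟨f, hf, hsum⟩ := exists_signs_sum_eq_two_mul_sub_card (α := α) (m := m) (by omega)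
  exact ⟨f, hf, by omega⟩

lemma exists_signs_sum_eq_two [Nonempty α] (hα : Even (Fintype.card α)) :
    ∃ f : α → ℤ, (∀ a, f a = 1 ∨ f a = -1) ∧ ∑ a, f a = 2 := by
  have hpos : 0 < Fintype.card α := Fintype.card_pos
  obtain ⟨m, hm⟩ := hα
  obtain ⟨f, hf, hsum⟩ := exists_signs_sum_eq_two_mul_sub_card (α := α) (m := m + 1) (by omega)
  exact ⟨f, hf, by omega⟩

end Signs

section CompleteMultipartite

open SimpleGraph

variable {ι : Type*} [Fintype ι] {V : ι → Type*} [∀ i, Fintype (V i)]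

lemma sum_neighborFinset_completeMultipartiteGraph {M : Type*} [AddCommMonoid M]
    (f : (Σ i, V i) → M) (v : Σ i, V i)
    [Fintype ((completeMultipartiteGraph V).neighborSet v)] :
    ∑ u ∈ (completeMultipartiteGraph V).neighborFinset v, f u =
      ∑ i ∈ Finset.univ.erase v.1, ∑ a, f ⟨i, a⟩ := by
  have hN : (completeMultipartiteGraph V).neighborFinset v =
      (Finset.univ.erase v.1).sigma fun _ => Finset.univ := by
    ext u
    simp [eq_comm]
  rw [hN, Finset.sum_sigma]

lemma IsSignedTotalDominating.four_le_sum [Nonempty (Σ i, V i)]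
    (hV : ∀ i, Even (Fintype.card (V i))) {f : (Σ i, V i) → ℤ}
    (hf : IsSignedTotalDominating (completeMultipartiteGraph V) f) : 4 ≤ ∑ v, f v := by
  have heven : ∀ i, Even (∑ a, f ⟨i, a⟩) := fun i =>
    (even_sum_signs_iff fun _ => hf.eq_one_or_eq_neg_one _).2 (hV i)
  have two_le_of_even {x : ℤ} (hx : Even x) (hpos : 0 < x) : 2 ≤ x :=
    Int.le_of_dvd hpos hx.two_dvd
  have hothers : ∀ v : Σ i, V i, 2 ≤ ∑ i ∈ Finset.univ.erase v.1, ∑ a, f ⟨i, a⟩ := fun v => by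
    have hdom := hf.one_le_sum_neighborFinset v
    rw [sum_neighborFinset_completeMultipartiteGraph] at hdom
    exact two_le_of_even (Finset.even_sum _ fun i _ => heven i) hdom
  obtain ⟨v⟩ := ‹Nonempty (Σ i, V i)›
  obtain ⟨i, -, hi⟩ : ∃ i ∈ Finset.univ.erase v.1, 0 < ∑ a, f ⟨i, a⟩ :=
    Finset.exists_lt_of_sum_lt (by simpa using two_pos.trans_le (hothers v))
  obtain ⟨a, -, -⟩ := Finset.exists_ne_zero_of_sum_ne_zero hi.ne'
  calc (4 : ℤ) = 2 + 2 := by norm_num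
    _ ≤ ∑ a, f ⟨i, a⟩ + ∑ l ∈ Finset.univ.erase i, ∑ a, f ⟨l, a⟩ :=
      add_le_add (two_le_of_even (heven i) hi) (hothers ⟨i, a⟩)
    _ = ∑ v, f v := by
      rw [Fintype.sum_sigma, Finset.add_sum_erase _ (fun l => ∑ a, f ⟨l, a⟩) (Finset.mem_univ i)]

lemma exists_isSignedTotalDominating_sum_eq_four {i j : ι} (hij : i ≠ j) [Nonempty (V i)]
    [Nonempty (V j)] (hV : ∀ l, Even (Fintype.card (V l))) :
    ∃ f, IsSignedTotalDominating (completeMultipartiteGraph V) f ∧ ∑ v, f v = 4 := by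
  have hpart : ∀ l, ∃ g : V l → ℤ, (∀ a, g a = 1 ∨ g a = -1) ∧
      ∑ a, g a = if l ∈ ({i, j} : Finset ι) then 2 else 0 := fun l => by
    split_ifs with hl
    · obtain rfl | rfl : l = i ∨ l = j := by simpa using hl
      all_goals exact exists_signs_sum_eq_two (hV _)
    · exact exists_signs_sum_eq_zero (hV l)
  choose g hsign hsum using hpart
  have htotal : ∑ l, ∑ a, g l a = 4 := by
    simp only [hsum, Finset.sum_ite_mem, Finset.univ_inter, Finset.sum_pair hij]
    norm_num
  refine ⟨fun v => g v.1 v.2, ⟨fun v => hsign _ _, fun v => ?_⟩, ?_⟩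
  · rw [sum_neighborFinset_completeMultipartiteGraph, Finset.sum_erase_eq_sub (Finset.mem_univ _),
      htotal, hsum]
    split_ifs <;> norm_num
  · rw [Fintype.sum_sigma, htotal]

theorem signedTotalDomNum_eq_four_all_even_general {i j : ι} (hij : i ≠ j) [Nonempty (V i)]
    [Nonempty (V j)] (hV : ∀ l, Even (Fintype.card (V l))) :
    signedTotalDomNum (completeMultipartiteGraph V) = 4 := by
  obtain ⟨f, hf, hsum⟩ := exists_isSignedTotalDominating_sum_eq_four hij hV
  have : Nonempty (Σ l, V l) := .map (Sigma.mk i) ‹_›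
  rw [hf.signedTotalDomNum_eq fun g hg => hsum.trans_le (hg.four_le_sum hV), hsum]

end CompleteMultipartite

theorem signedTotalDomNum_eq_four_all_even
    (k : ℕ) (hk : 2 ≤ k) (n : Fin k → ℕ) (hn : ∀ i, Even (n i) ∧ 0 < n i) :
    signedTotalDomNum (SimpleGraph.completeMultipartiteGraph fun i : Fin k => Fin (n i)) = 4 := by
  have : Nontrivial (Fin k) := Fin.nontrivial_iff_two_le.2 hk
  have (i : Fin k) : Nonempty (Fin (n i)) := ⟨0, (hn i).2⟩
  obtain ⟨i, j, hij⟩ := exists_pair_ne (Fin k)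
  exact signedTotalDomNum_eq_four_all_even_general hij fun l => by simpa using (hn l).1
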